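/- arXiv:1508.05813 — 2 statements merged into one kernel-verified Lean document; each statement's English description precedes it below -/
import Mathlib

section
/- Let (R,m) be a commutative Noetherian local ring, let C be a semidualizing R-module, and let M be a nonzero Cohen-Macaulay R-module with G_C-dim_R(M) < ∞. Then the type r_R(C) divides the type r_R(M). -/
open CategoryTheory

universe u

noncomputable section

variable (R : Type u) [CommRing R]

/-- The Ext module `Ext^i_R(M, N)`, via the derived functor definition. -/
noncomputable def extM (M N : Type u) [AddCommGroup M] [Module R M]
    [AddCommGroup N] [Module R N] (i : ℕ) : ModuleCat R :=
  ((Ext R (ModuleCat.{u} R) i).obj (Opposite.op (ModuleCat.of R M))).obj (ModuleCat.of R N)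

/-- The Tor module `Tor_i^R(M, N)`, via the derived functor definition. -/
noncomputable def torM (M N : Type u) [AddCommGroup M] [Module R M]
    [AddCommGroup N] [Module R N] (i : ℕ) : ModuleCat R :=
  ((Tor (ModuleCat.{u} R) i).obj (ModuleCat.of R M)).obj (ModuleCat.of R N)

/-- `C` is a semidualizing `R`-module: it is finitely generated, the homothety map
`R → Hom_R(C,C)` is bijective, and `Ext^i_R(C,C) = 0` for all `i > 0`. -/
def IsSemidualizing (C : Type u) [AddCommGroup C] [Module R C] : Prop :=
  Module.Finite R C ∧
  Function.Bijective (fun r : R => r • (LinearMap.id : C →ₗ[R] C)) ∧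
  ∀ i : ℕ, 0 < i → Subsingleton (extM R C C i)

/-- Injective dimension of a module, characterized via vanishing of Ext. -/
noncomputable def injDim (M : Type u) [AddCommGroup M] [Module R M] : ℕ∞ :=
  sInf {n : ℕ∞ | ∀ (N : Type u) (_ : AddCommGroup N) (_ : Module R N) (i : ℕ),
    n < i → Subsingleton (extM R N M i)}

/-- Flat dimension of a module, characterized via vanishing of Tor. -/
noncomputable def flatDim (M : Type u) [AddCommGroup M] [Module R M] : ℕ∞ :=
  sInf {n : ℕ∞ | ∀ (N : Type u) (_ : AddCommGroup N) (_ : Module R N) (i : ℕ),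
    n < i → Subsingleton (torM R N M i)}

/-- The length of a module, as the height of `⊤` in its submodule lattice. -/
noncomputable def mLength (M : Type u) [AddCommGroup M] [Module R M] : ℕ∞ :=
  Order.height (⊤ : Submodule R M)

/-- Depth of a module over a local ring: the least `i` with `Ext^i(k, M) ≠ 0`. -/
noncomputable def depth [IsLocalRing R] (M : Type u) [AddCommGroup M] [Module R M] : ℕ∞ :=
  sInf {n : ℕ∞ | ∃ i : ℕ, n = i ∧ Nontrivial (extM R (IsLocalRing.ResidueField R) M i)}

/-- Depth, as a natural number. -/
noncomputable def depthNat [IsLocalRing R] (M : Type u) [AddCommGroup M] [Module R M] : ℕ :=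
  sInf {i : ℕ | Nontrivial (extM R (IsLocalRing.ResidueField R) M i)}

/-- The type of a module: `r_R(M) = dim_k Ext^t_R(k, M)` where `t = depth_R(M)`. -/
noncomputable def rtype [IsLocalRing R] (M : Type u) [AddCommGroup M] [Module R M] : ℕ∞ :=
  mLength R (extM R (IsLocalRing.ResidueField R) M (depthNat R M))

/-- A dualizing module: a semidualizing module of finite injective dimension. -/
def IsDualizing (C : Type u) [AddCommGroup C] [Module R C] : Prop :=
  IsSemidualizing R C ∧ injDim R C < ⊤

/-- A pointwise dualizing module: the localization at every maximal ideal is dualizing. -/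
def IsPointwiseDualizing (C : Type u) [AddCommGroup C] [Module R C] : Prop :=
  IsSemidualizing R C ∧ ∀ (p : Ideal R) [p.IsPrime], p.IsMaximal →
    IsDualizing (Localization.AtPrime p) (LocalizedModule p.primeCompl C)

/-- Height of a prime ideal. -/
noncomputable def primeHeight (p : Ideal R) [hp : p.IsPrime] : ℕ∞ :=
  Order.height (⟨p, hp⟩ : PrimeSpectrum R)

/-- A totally `C`-reflexive module. -/
def IsTotallyCReflexive (C M : Type u) [AddCommGroup C] [Module R C]
    [AddCommGroup M] [Module R M] : Prop :=
  Module.Finite R M ∧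
  Function.Bijective ((LinearMap.id : (M →ₗ[R] C) →ₗ[R] (M →ₗ[R] C)).flip) ∧
  ∀ i : ℕ, 0 < i →
    Subsingleton (extM R M C i) ∧ Subsingleton (extM R (M →ₗ[R] C) C i)

/-- `G_C`-dimension of `M` is at most `n`. -/
def gcDimLE (C : Type u) [AddCommGroup C] [Module R C] :
    ℕ → (M : Type u) → [AddCommGroup M] → [Module R M] → Prop
  | 0, M, _, _ => IsTotallyCReflexive R C M
  | n+1, M, _, _ => ∃ (G K : Type u) (_ : AddCommGroup G) (_ : Module R G)
      (_ : AddCommGroup K) (_ : Module R K) (f : K →ₗ[R] G) (g : G →ₗ[R] M),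
      IsTotallyCReflexive R C G ∧ Function.Injective f ∧ Function.Surjective g ∧
      LinearMap.range f = LinearMap.ker g ∧ gcDimLE C n K

/-- `M` has finite `G_C`-dimension. -/
def HasFiniteGCDim (C M : Type u) [AddCommGroup C] [Module R C]
    [AddCommGroup M] [Module R M] : Prop :=
  ∃ n : ℕ, gcDimLE R C n M

/-- A finitely generated module over a local ring is Cohen-Macaulay if its depth
equals its Krull dimension. -/
def IsCohenMacaulayModule [IsLocalRing R] (M : Type u) [AddCommGroup M] [Module R M] : Prop :=
  Module.Finite R M ∧ (depth R M : WithBot ℕ∞) = Order.krullDim (Module.support R M)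

/-- The `S`-module structure on `Hom_R(S, M)` through the domain, for an `R`-algebra `S`. -/
instance homDomModule (S : Type u) [CommRing S] [Algebra R S]
    (M : Type u) [AddCommGroup M] [Module R M] : Module S (S →ₗ[R] M) where
  smul s f := f.comp (LinearMap.mul R S s)
  one_smul f := by ext x; show f (1 * x) = f x; rw [one_mul]
  mul_smul s t f := by ext x; show f (s * t * x) = f (t * (s * x)); ring_nf
  smul_zero s := by ext x; rfl
  smul_add s f g := by ext x; rfl
  add_smul s t f := by
    ext x; show f ((s + t) * x) = f (s * x) + f (t * x); rw [add_mul, map_add]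
  zero_smul f := by ext x; show f (0 * x) = 0; rw [zero_mul, map_zero]

/-- The Bass number `μ^i(p, M) = dim_{k(p)} Ext^i_{R_p}(k(p), M_p)`. -/
noncomputable def bassNumber (p : Ideal R) [p.IsPrime] (i : ℕ)
    (M : Type u) [AddCommGroup M] [Module R M] : ℕ∞ :=
  mLength (Localization.AtPrime p)
    (extM (Localization.AtPrime p) (IsLocalRing.ResidueField (Localization.AtPrime p))
      (LocalizedModule p.primeCompl M) i)

/-- The dual Bass number `π_i(p, M) = dim_{k(p)} Tor_i^{R_p}(k(p), Hom_R(R_p, M))`. -/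
noncomputable def dualBassNumber (p : Ideal R) [p.IsPrime] (i : ℕ)
    (M : Type u) [AddCommGroup M] [Module R M] : ℕ∞ :=
  mLength (Localization.AtPrime p)
    (torM (Localization.AtPrime p) (IsLocalRing.ResidueField (Localization.AtPrime p))
      (Localization.AtPrime p →ₗ[R] M) i)

/-- A cotorsion module: `Ext^1_R(F, M) = 0` for every flat module `F`. -/
def IsCotorsion (M : Type u) [AddCommGroup M] [Module R M] : Prop :=
  ∀ (F : Type u) (_ : AddCommGroup F) (_ : Module R F), Module.Flat R F →
    Subsingleton (extM R F M 1)

/-- A `C`-flat module: one isomorphic to `C ⊗_R F` with `F` flat. -/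
def IsCFlat (C M : Type u) [AddCommGroup C] [Module R C] [AddCommGroup M] [Module R M] : Prop :=
  ∃ (F : Type u) (_ : AddCommGroup F) (_ : Module R F), Module.Flat R F ∧
    Nonempty (M ≃ₗ[R] TensorProduct R C F)

/-- A `C`-injective module: one isomorphic to `Hom_R(C, I)` with `I` injective. -/
def IsCInjective (C M : Type u) [AddCommGroup C] [Module R C]
    [AddCommGroup M] [Module R M] : Prop :=
  ∃ (I : Type u) (_ : AddCommGroup I) (_ : Module R I), Module.Injective R I ∧
    Nonempty (M ≃ₗ[R] (C →ₗ[R] I))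

/-- `φ : F → M` is a flat cover of `M`. -/
def IsFlatCover (M F : Type u) [AddCommGroup M] [Module R M] [AddCommGroup F] [Module R F]
    (φ : F →ₗ[R] M) : Prop :=
  Module.Flat R F ∧
  (∀ (G : Type u) (_ : AddCommGroup G) (_ : Module R G), Module.Flat R G →
    ∀ ψ : G →ₗ[R] M, ∃ h : G →ₗ[R] F, φ.comp h = ψ) ∧
  (∀ ψ : F →ₗ[R] F, φ.comp ψ = φ → Function.Bijective ψ)

/-- `E` is an injective hull of `N`: `E` is injective and contains `N` as an
essential submodule. -/
def IsInjectiveHull (N E : Type u) [AddCommGroup N] [Module R N]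
    [AddCommGroup E] [Module R E] : Prop :=
  Module.Injective R E ∧ ∃ ι : N →ₗ[R] E, Function.Injective ι ∧
    ∀ K : Submodule R E, K ≠ ⊥ → K ⊓ LinearMap.range ι ≠ ⊥

end

/-! Write `k` for the residue field, `N^* = Hom(N, C)`, `t = depth C` and `E = Ext^t(k, C)`, so that
`r(C) = ℓ(E)`, where `ℓ` denotes length.

The basic fact is that `Ext^t(k, N^*) = Hom(N, E)` and `Ext^i(k, N^*) = 0` for `i < t`, whenever `N`
is finitely generated with `Ext^{>0}(N, C) = 0`: this is clear for `N` free and follows by dimension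
shifting in general (`dext_hom_vanish`, `evMap_bijective`). For `M` totally `C`-reflexive, applying it
to `N = M^*` gives `Ext^t(k, M) = Hom(M^*, E)` (`coev_bijective`). As `E` is a `k`-vector space, this
is a direct sum of copies of `E`, one for each minimal generator of `M^*`, so `r(C)` divides `r(M)`.

For general `M`, take `0 → K → G → M → 0` with `G` totally `C`-reflexive and `K` of smaller
`G_C`-dimension. If `Ext^j(k, M) = 0` for all `j < t`, then `M` is itself totally `C`-reflexive
(`reflexive_of_vanish`): by induction `K` is, and injectivity of `Ext^t(k, K) → Ext^t(k, G)` forces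
`G^* → K^*` to be surjective, because the kernel of the former is `Hom(coker (G^* → K^*), E)`
(`nonempty_ker_equiv`). Otherwise `i = depth M < t`, and as `Ext^i(k, G) = 0`, the connecting map
identifies `Ext^i(k, M)` with the kernel of `Ext^{i+1}(k, K) → Ext^{i+1}(k, G)`. If `i + 1 < t` this
is `Ext^{i+1}(k, K)` and induction applies to `K`; if `i + 1 = t`, then `K` is totally
`C`-reflexive, and the kernel `Hom(coker (G^* → K^*), E)` is again a direct sum of copies of `E`
(`dvd_length`).

Types are defined through Ext as a derived functor, while the long exact sequences are available for
the Ext groups of the derived category; `nonempty_extLinearEquiv` compares the two. -/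

/-! ### Comparison of the two models of Ext -/

section Comparison

variable {R : Type u} [CommRing R]

/-- In degree zero there are no coboundaries. -/
theorem extMk_eq_zero_zero {X Y : ModuleCat.{u} R} (P : ProjectiveResolution X)
    (f : P.complex.X 0 ⟶ Y) (hf : P.complex.d 1 0 ≫ f = 0)
    (h : P.extMk f 1 rfl hf = 0) : f = 0 := by
  rw [← P.extEquivCohomologyClass.apply_eq_iff_eq, P.extEquivCohomologyClass_extMk,
    P.extEquivCohomologyClass_zero, CochainComplex.HomComplex.CohomologyClass.mk_eq_zero_iff,
    CochainComplex.HomComplex.Cocycle.toSingleMk_mem_coboundaries_iff _ _ _ _ _ 1 (by simp)] at h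
  obtain ⟨g, hg⟩ := h
  have h0 : P.cochainComplex.d (-((0 : ℕ) : ℤ)) 1 = 0 := by
    apply Limits.IsZero.eq_of_tgt
    exact CochainComplex.isZero_of_isStrictlyLE _ 0 1 (by simp)
  rw [h0, Limits.zero_comp] at hg
  rw [← cancel_epi (P.cochainComplexXIso (-((0 : ℕ) : ℤ)) 0 rfl).hom, ← hg, Limits.comp_zero]

/-- The map `f ↦ extMk f` is `R`-homogeneous. -/
theorem smul_extMk {X Y : ModuleCat.{u} R} (P : ProjectiveResolution X) {n : ℕ}
    (r : R) (f : P.complex.X n ⟶ Y) (hf : P.complex.d (n + 1) n ≫ f = 0) :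
    r • P.extMk f (n + 1) rfl hf = P.extMk (r • f) (n + 1) rfl (by simp [hf]) := by
  rw [Abelian.Ext.smul_eq_comp_mk₀, P.extMk_comp_mk₀]
  simp

/-- The derived functor of `Hom(-, Y)` agrees, `R`-linearly, with the Ext groups of the derived
category. Both are computed from the same projective resolution `P` of `X`: cocycles
`P_n → Y` surject onto the latter via `extMk`, with kernel the coboundaries. -/
theorem nonempty_extLinearEquiv (X Y : ModuleCat.{u} R) (n : ℕ) :
    Nonempty (((Ext R (ModuleCat.{u} R) n).obj (Opposite.op X)).obj Y ≃ₗ[R]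
      Abelian.Ext.{u} X Y n) := by
  let P := projectiveResolution X
  -- `K` is the complex `Hom(P, Y)`, and `S` its piece in degrees `n - 1`, `n`, `n + 1`
  -- (in degree `0`, the incoming map is zero).
  let K := P.complex.linearYonedaObj R Y
  let S := K.sc' ((ComplexShape.up ℕ).prev n) n (n + 1)
  let eS : K.homology n ≅ S.homology :=
    ShortComplex.homologyMapIso (K.isoSc' _ _ _ rfl (by simp))
  have hz (f : LinearMap.ker S.g.hom) :
      P.complex.d (n + 1) n ≫ (show P.complex.X n ⟶ Y from f.1) = 0 := f.2
  let φ : LinearMap.ker S.g.hom →ₗ[R] Abelian.Ext.{u} X Y n :=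
    { toFun := fun f => P.extMk (show P.complex.X n ⟶ Y from f.1) (n + 1) rfl (hz f)
      map_add' := fun f g => (P.add_extMk _ _ _ _ (hz f) (hz g)).symm
      map_smul' := fun r f => (smul_extMk P r _ (hz f)).symm }
  have hs : Function.Surjective φ := fun α => by
    obtain ⟨f, hf, rfl⟩ := P.extMk_surjective α (n + 1) rfl
    exact ⟨⟨f, hf⟩, rfl⟩
  have hk : LinearMap.range S.moduleCatToCycles = LinearMap.ker φ := by
    ext ⟨f, hf⟩
    rcases n with _ | p
    · have hf0 : K.d ((ComplexShape.up ℕ).prev 0) 0 = 0 := K.shape _ _ (by simp)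
      constructor
      · rintro ⟨g, hg⟩
        have h1 : S.f.hom g = f := congrArg Subtype.val hg
        have h2 : f = 0 := by rw [← h1]; change (K.d _ 0).hom g = 0; rw [hf0]; rfl
        subst h2
        exact P.extMk_zero 1 rfl
      · intro h
        have := extMk_eq_zero_zero P f (hz ⟨f, hf⟩) h
        exact ⟨0, Subtype.ext (by rw [map_zero]; exact this.symm)⟩
    · have hp : (ComplexShape.up ℕ).prev (p + 1) = p := by simp
      have key : (∃ g : K.X ((ComplexShape.up ℕ).prev (p + 1)), (K.d _ (p + 1)).hom g = f) ↔
          ∃ g : K.X p, (K.d p (p + 1)).hom g = f := by rw [hp]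
      refine Iff.trans ⟨?_, ?_⟩
        (key.trans (P.extMk_eq_zero_iff f (p + 2) rfl (hz ⟨f, hf⟩) p rfl).symm)
      · rintro ⟨g, hg⟩
        exact ⟨g, congrArg Subtype.val hg⟩
      · rintro ⟨g, hg⟩
        exact ⟨g, Subtype.ext hg⟩
  let e3 : (LinearMap.ker S.g.hom ⧸ LinearMap.range S.moduleCatToCycles) ≃ₗ[R]
      Abelian.Ext.{u} X Y n :=
    (Submodule.quotEquivOfEq _ _ hk).trans (φ.quotKerEquivOfSurjective hs)
  exact ⟨((P.isoExt n Y) ≪≫ eS ≪≫ S.moduleCatHomologyIso).toLinearEquiv.trans e3⟩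
end Comparison

/-! ### Functoriality and long exact sequences of Ext -/

section ExtModules

variable (R : Type u) [CommRing R]

/-- The module `Ext^n_R(X, Y)`, in Mathlib's derived-category model. -/
abbrev DExt (X Y : Type u) [AddCommGroup X] [Module R X] [AddCommGroup Y] [Module R Y] (n : ℕ) :
    Type u :=
  Abelian.Ext.{u} (ModuleCat.of R X) (ModuleCat.of R Y) n

variable {R}
variable {A B Q Y Z W : Type u} [AddCommGroup A] [Module R A] [AddCommGroup B] [Module R B]
  [AddCommGroup Q] [Module R Q] [AddCommGroup Y] [Module R Y] [AddCommGroup Z] [Module R Z]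
  [AddCommGroup W] [Module R W] (X : Type u) [AddCommGroup X] [Module R X]

theorem subsingleton_extM_iff (n : ℕ) :
    Subsingleton (extM R X Y n) ↔ Subsingleton (DExt R X Y n) := by
  obtain ⟨e⟩ := nonempty_extLinearEquiv (ModuleCat.of R X) (ModuleCat.of R Y) n
  exact e.toEquiv.subsingleton_congr

theorem mLength_extM (n : ℕ) :
    mLength R (extM R X Y n) = Module.length R (DExt R X Y n) := by
  obtain ⟨e⟩ := nonempty_extLinearEquiv (ModuleCat.of R X) (ModuleCat.of R Y) n
  rw [mLength, ← Module.length_eq_height]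
  exact e.length_eq

/-- The map `Ext^n_R(X, Y) → Ext^n_R(X, Z)` induced by `f : Y → Z`. -/
noncomputable def push (n : ℕ) (f : Y →ₗ[R] Z) : DExt R X Y n →ₗ[R] DExt R X Z n :=
  (Abelian.Ext.bilinearCompOfLinear R _ _ _ n 0 n (add_zero n)).flip
    (Abelian.Ext.mk₀ (ModuleCat.ofHom f))

theorem push_apply (n : ℕ) (f : Y →ₗ[R] Z) (x : DExt R X Y n) :
    push X n f x = x.comp (Abelian.Ext.mk₀ (ModuleCat.ofHom f)) (add_zero n) := rfl

theorem push_push (n : ℕ) (f : Y →ₗ[R] Z) (g : Z →ₗ[R] W) (x : DExt R X Y n) :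
    push X n g (push X n f x) = push X n (g ∘ₗ f) x := by
  simp only [push_apply]
  rw [Abelian.Ext.comp_assoc_of_third_deg_zero, Abelian.Ext.mk₀_comp_mk₀, ModuleCat.ofHom_comp]

theorem push_id (n : ℕ) (x : DExt R X Y n) : push X n (LinearMap.id) x = x := by
  rw [push_apply, ModuleCat.ofHom_id, Abelian.Ext.comp_mk₀_id]

theorem push_add (n : ℕ) (f g : Y →ₗ[R] Z) : push X n (f + g) = push X n f + push X n g := by
  rw [push, ModuleCat.ofHom_add, Abelian.Ext.mk₀_add, map_add]; rfl

theorem push_smul (n : ℕ) (r : R) (f : Y →ₗ[R] Z) : push X n (r • f) = r • push X n f := by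
  have : ModuleCat.ofHom (r • f) = r • ModuleCat.ofHom f := rfl
  rw [push, this, Abelian.Ext.mk₀_smul, map_smul]; rfl

theorem push_zero (n : ℕ) : push X n (0 : Y →ₗ[R] Z) = 0 := by
  simpa using push_smul X n (0 : R) (0 : Y →ₗ[R] Z)

theorem push_sum {ι : Type*} (s : Finset ι) (n : ℕ) (f : ι → Y →ₗ[R] Z) (x : DExt R X Y n) :
    push X n (∑ i ∈ s, f i) x = ∑ i ∈ s, push X n (f i) x := by
  classical
  induction s using Finset.induction_on with
  | empty => simp [push_zero]
  | insert a s ha ih => rw [Finset.sum_insert ha, Finset.sum_insert ha, push_add,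
      LinearMap.add_apply, ih]

variable {f : A →ₗ[R] B} {g : B →ₗ[R] Q}

theorem exists_shortExact (hf : Function.Injective f) (hg : Function.Surjective g)
    (h : LinearMap.range f = LinearMap.ker g) :
    ∃ w, (ShortComplex.mk (ModuleCat.ofHom f) (ModuleCat.ofHom g) w).ShortExact := by
  have h' : Function.Exact f g := LinearMap.exact_iff.2 h.symm
  exact ⟨by rw [← ModuleCat.ofHom_comp, h'.linearMap_comp_eq_zero]; rfl,
    { exact := ModuleCat.shortComplex_exact _ h'
      mono_f := (ModuleCat.mono_iff_injective _).2 hf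
      epi_g := (ModuleCat.epi_iff_surjective _).2 hg }⟩

/-- Exactness of the long sequence for `Ext(X, -)` at `Ext^i(X, A)`; for `i = 0` the hypothesis `hQ` is
vacuous. -/
theorem push_injective (hf : Function.Injective f) (hg : Function.Surjective g)
    (h : LinearMap.range f = LinearMap.ker g) (i : ℕ)
    (hQ : ∀ j, j + 1 = i → Subsingleton (DExt R X Q j)) : Function.Injective (push X i f) := by
  obtain ⟨w, hS⟩ := exists_shortExact hf hg h
  rcases i with _ | i
  · have : Mono (ModuleCat.ofHom f) := hS.mono_f
    exact Abelian.Ext.postcomp_mk₀_injective_of_mono _ (ModuleCat.ofHom f)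
  · rw [injective_iff_map_eq_zero]
    intro x hx
    obtain ⟨y, rfl⟩ := Abelian.Ext.covariant_sequence_exact₁ _ hS x hx rfl
    have := hQ i rfl
    rw [Subsingleton.elim y 0, Abelian.Ext.zero_comp]

theorem push_exact (hf : Function.Injective f) (hg : Function.Surjective g)
    (h : LinearMap.range f = LinearMap.ker g) {n : ℕ} (x : DExt R X B n)
    (hx : push X n g x = 0) : ∃ y, push X n f y = x := by
  obtain ⟨w, hS⟩ := exists_shortExact hf hg h
  exact Abelian.Ext.covariant_sequence_exact₂ _ hS x hx

/-- The connecting map of the long exact sequence for `Ext(X, -)`. -/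
theorem exists_connecting (hf : Function.Injective f) (hg : Function.Surjective g)
    (h : LinearMap.range f = LinearMap.ker g) (n : ℕ) :
    ∃ δ : DExt R X Q n →ₗ[R] DExt R X A (n + 1),
      (∀ x, δ x = 0 → ∃ y, push X n g y = x) ∧
      LinearMap.range δ = LinearMap.ker (push X (n + 1) f) := by
  obtain ⟨w, hS⟩ := exists_shortExact hf hg h
  refine ⟨(Abelian.Ext.bilinearCompOfLinear R _ _ _ n 1 (n + 1) rfl).flip hS.extClass,
    fun x hx => Abelian.Ext.covariant_sequence_exact₃ _ hS x rfl hx, le_antisymm ?_ ?_⟩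
  · rintro _ ⟨x, rfl⟩
    change (x.comp hS.extClass rfl).comp (Abelian.Ext.mk₀ (ModuleCat.ofHom f)) (add_zero _) = 0
    rw [Abelian.Ext.comp_assoc_of_third_deg_zero, hS.extClass_comp, Abelian.Ext.comp_zero]
  · intro x hx
    exact Abelian.Ext.covariant_sequence_exact₁ _ hS x hx rfl

/-- Vanishing of `Ext^{n+1}(Q, Y)` from the long exact sequence for `Ext(-, Y)`. -/
theorem dext_subsingleton_right (hf : Function.Injective f) (hg : Function.Surjective g)
    (h : LinearMap.range f = LinearMap.ker g) (n : ℕ)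
    (hA : Subsingleton (DExt R A Y n)) (hB : Subsingleton (DExt R B Y (n + 1))) :
    Subsingleton (DExt R Q Y (n + 1)) := by
  obtain ⟨w, hS⟩ := exists_shortExact hf hg h
  refine subsingleton_of_forall_eq 0 fun x => ?_
  obtain ⟨y, rfl⟩ := Abelian.Ext.contravariant_sequence_exact₃ hS _ x (Subsingleton.elim _ _)
    (add_comm 1 n)
  rw [Subsingleton.elim (α := DExt R A Y n) y 0, Abelian.Ext.comp_zero]

/-- Vanishing of `Ext^n(A, Y)` from the long exact sequence for `Ext(-, Y)`. -/
theorem dext_subsingleton_left (hf : Function.Injective f) (hg : Function.Surjective g)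
    (h : LinearMap.range f = LinearMap.ker g) (n : ℕ)
    (hQ : Subsingleton (DExt R Q Y (n + 1))) (hB : Subsingleton (DExt R B Y n)) :
    Subsingleton (DExt R A Y n) := by
  obtain ⟨w, hS⟩ := exists_shortExact hf hg h
  refine subsingleton_of_forall_eq 0 fun x => ?_
  obtain ⟨y, rfl⟩ := Abelian.Ext.contravariant_sequence_exact₁ hS _ x
    (add_comm 1 n) (Subsingleton.elim (α := DExt R Q Y (n + 1)) _ _)
  rw [Subsingleton.elim (α := DExt R B Y n) y 0, Abelian.Ext.comp_zero]

theorem lcomp_surjective (hf : Function.Injective f) (hg : Function.Surjective g)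
    (h : LinearMap.range f = LinearMap.ker g) (hQ : Subsingleton (DExt R Q Y 1)) :
    Function.Surjective (f.lcomp R Y) := by
  obtain ⟨w, hS⟩ := exists_shortExact hf hg h
  intro φ
  obtain ⟨y, hy⟩ := Abelian.Ext.contravariant_sequence_exact₁ hS _
    (Abelian.Ext.mk₀ (ModuleCat.ofHom φ)) (add_zero 1)
    (Subsingleton.elim (α := DExt R Q Y 1) _ _)
  obtain ⟨ψ, rfl⟩ := (Abelian.Ext.mk₀_bijective _ _).2 y
  rw [Abelian.Ext.mk₀_comp_mk₀] at hy
  have := (Abelian.Ext.mk₀_bijective _ _).1 hy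
  exact ⟨ψ.hom, congrArg ModuleCat.Hom.hom this⟩

/-- If every map `A → Y` extends to `B`, then `Ext^1(B, Y) = 0` forces `Ext^1(Q, Y) = 0`. -/
theorem dext_one_subsingleton (hf : Function.Injective f) (hg : Function.Surjective g)
    (h : LinearMap.range f = LinearMap.ker g) (hB : Subsingleton (DExt R B Y 1))
    (hs : Function.Surjective (f.lcomp R Y)) : Subsingleton (DExt R Q Y 1) := by
  obtain ⟨w, hS⟩ := exists_shortExact hf hg h
  refine subsingleton_of_forall_eq 0 fun x => ?_
  obtain ⟨y, rfl⟩ := Abelian.Ext.contravariant_sequence_exact₃ hS _ x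
    (Subsingleton.elim (α := DExt R B Y 1) _ _) (add_zero 1)
  obtain ⟨φ, rfl⟩ := (Abelian.Ext.mk₀_bijective _ _).2 y
  obtain ⟨ψ, hψ⟩ := hs φ.hom
  have h1 : φ = ModuleCat.ofHom f ≫ ModuleCat.ofHom ψ := by
    ext1; exact hψ.symm
  rw [h1, ← Abelian.Ext.mk₀_comp_mk₀, ← Abelian.Ext.comp_assoc_of_second_deg_zero,
    hS.extClass_comp, Abelian.Ext.zero_comp]

theorem lcomp_range_eq_ker (h : LinearMap.range f = LinearMap.ker g)
    (hg : Function.Surjective g) :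
    LinearMap.range (g.lcomp R Y) = LinearMap.ker (f.lcomp R Y) := by
  have h' : Function.Exact f g := LinearMap.exact_iff.2 h.symm
  ext φ
  constructor
  · rintro ⟨ψ, rfl⟩
    ext a
    change ψ (g (f a)) = 0
    rw [h'.apply_apply_eq_zero, map_zero]
  · intro hφ
    have hk : LinearMap.ker g ≤ LinearMap.ker φ := by
      rw [← h]
      rintro _ ⟨a, rfl⟩
      exact LinearMap.congr_fun hφ a
    refine ⟨(LinearMap.ker g).liftQ φ hk ∘ₗ (g.quotKerEquivOfSurjective hg).symm, ?_⟩
    ext b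
    change (LinearMap.ker g).liftQ φ hk ((g.quotKerEquivOfSurjective hg).symm (g b)) = φ b
    have : (g.quotKerEquivOfSurjective hg).symm (g b) = Submodule.Quotient.mk b := by
      rw [LinearEquiv.symm_apply_eq]; rfl
    rw [this]; rfl

theorem lcomp_injective (hg : Function.Surjective g) : Function.Injective (g.lcomp R Y) :=
  fun _ _ h => LinearMap.ext fun q => by
    obtain ⟨b, rfl⟩ := hg q
    exact LinearMap.congr_fun h b

end ExtModules

/-! ### Evaluation maps -/

section Evaluation

variable {R : Type u} [CommRing R] (X : Type u) [AddCommGroup X] [Module R X]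
  (M C : Type u) [AddCommGroup M] [Module R M] [AddCommGroup C] [Module R C]

/-- The natural map `Ext^n_R(X, M) → Hom_R(Hom_R(M, C), Ext^n_R(X, C))`, sending a class `x` to
`φ ↦ φ_*(x)`. -/
noncomputable def coev (n : ℕ) : DExt R X M n →ₗ[R] (M →ₗ[R] C) →ₗ[R] DExt R X C n :=
  LinearMap.flip
    { toFun := fun φ => push X n φ
      map_add' := fun φ ψ => push_add X n φ ψ
      map_smul' := fun r φ => push_smul X n r φ }

theorem coev_apply (n : ℕ) (x : DExt R X M n) (φ : M →ₗ[R] C) :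
    coev X M C n x φ = push X n φ x := rfl

variable (N : Type u) [AddCommGroup N] [Module R N]

/-- The natural map `Ext^n_R(X, Hom_R(N, C)) → Hom_R(N, Ext^n_R(X, C))`, sending a class `x` to
`v ↦ (ev_v)_*(x)`. -/
noncomputable def evMap (n : ℕ) : DExt R X (N →ₗ[R] C) n →ₗ[R] N →ₗ[R] DExt R X C n :=
  LinearMap.flip
    { toFun := fun v => push X n (LinearMap.applyₗ v)
      map_add' := fun v w => by rw [map_add, push_add]
      map_smul' := fun r v => by rw [map_smul, push_smul]; rfl }

theorem evMap_apply (n : ℕ) (x : DExt R X (N →ₗ[R] C) n) (v : N) :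
    evMap X C N n x v = push X n (LinearMap.applyₗ v) x := rfl

variable {N}

/-- `evMap` is natural in `N`. -/
theorem evMap_push {N' : Type u} [AddCommGroup N'] [Module R N'] (f : N' →ₗ[R] N) (n : ℕ)
    (x : DExt R X (N →ₗ[R] C) n) :
    evMap X C N' n (push X n (f.lcomp R C) x) = evMap X C N n x ∘ₗ f := by
  ext v
  rw [evMap_apply, push_push]
  rfl

theorem evMap_bijective_free (b n : ℕ) : Function.Bijective (evMap (R := R) X C (Fin b → R) n) := by
  -- `s i` is the `i`-th inclusion of `C` in `C^b = Hom(R^b, C)`.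
  let s (i : Fin b) : C →ₗ[R] ((Fin b → R) →ₗ[R] C) :=
    LinearMap.flip (LinearMap.toSpanSingleton R (C →ₗ[R] C) LinearMap.id ∘ₗ LinearMap.proj i)
  have hs (i : Fin b) (c : C) (v : Fin b → R) : s i c v = v i • c := rfl
  let e (i : Fin b) : Fin b → R := Pi.single i 1
  have hid : ∑ i, s i ∘ₗ LinearMap.applyₗ (e i) =
      (LinearMap.id : ((Fin b → R) →ₗ[R] C) →ₗ[R] _) := by
    refine LinearMap.ext fun φ => LinearMap.ext fun v => ?_
    simp only [LinearMap.sum_apply, LinearMap.comp_apply, hs, LinearMap.applyₗ_apply_apply,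
      LinearMap.id_apply]
    have hv : v = ∑ i, v i • e i := by ext j; simp [e, Pi.single_apply]
    conv_rhs => rw [hv, map_sum]
    exact Finset.sum_congr rfl fun i _ => (map_smul φ _ _).symm
  constructor
  · rw [injective_iff_map_eq_zero]
    intro x hx
    rw [← push_id X n x, ← hid, push_sum]
    refine Finset.sum_eq_zero fun i _ => ?_
    rw [← push_push, ← evMap_apply, hx]
    simp
  · intro φ
    refine ⟨∑ i, push X n (s i) (φ (e i)), ?_⟩
    refine (Pi.basisFun R (Fin b)).ext fun j => ?_
    rw [Pi.basisFun_apply, evMap_apply, map_sum, Finset.sum_eq_single j]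
    · rw [push_push]
      have : LinearMap.applyₗ (Pi.single j 1 : Fin b → R) ∘ₗ s j = LinearMap.id := by
        ext c; simp [hs]
      rw [this, push_id]
    · intro i _ hij
      rw [push_push]
      have : LinearMap.applyₗ (Pi.single j 1 : Fin b → R) ∘ₗ s i = 0 := by
        ext c; simp [hs, hij]
      rw [this, push_zero]; rfl
    · simp

/-- A first syzygy in a free presentation, with the induced dual exact sequence: if `N` is
finitely generated and `Ext^{>0}(N, C) = 0`, then `Ext^{>0}(N', C) = 0` for its syzygy `N'`, and
`0 → Hom(N, C) → Hom(R^b, C) → Hom(N', C) → 0` is exact. -/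
theorem exists_syzygy [Module.Finite R N] (hN : ∀ i, 0 < i → Subsingleton (DExt R N C i)) :
    ∃ (b : ℕ) (N' : Submodule R (Fin b → R)) (g : (Fin b → R) →ₗ[R] N),
      Function.Surjective g ∧ LinearMap.range N'.subtype = LinearMap.ker g ∧
      (∀ i, 0 < i → Subsingleton (DExt R N' C i)) ∧
      Function.Surjective (N'.subtype.lcomp R C) := by
  obtain ⟨b, g, hg⟩ := Module.Finite.exists_fin' R N
  have hr : LinearMap.range (LinearMap.ker g).subtype = LinearMap.ker g := Submodule.range_subtype _
  have hi : Function.Injective (LinearMap.ker g).subtype := Subtype.val_injective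
  refine ⟨b, LinearMap.ker g, g, hg, hr, fun i hi0 => ?_, lcomp_surjective hi hg hr (hN 1 one_pos)⟩
  obtain ⟨i, rfl⟩ := Nat.exists_eq_add_of_lt hi0
  refine dext_subsingleton_left hi hg hr _ (hN _ (Nat.succ_pos _)) ?_
  have : Projective (ModuleCat.of R (Fin b → R)) := by
    rw [← IsProjective.iff_projective]; infer_instance
  exact subsingleton_of_forall_eq 0 fun x => Abelian.Ext.eq_zero_of_projective x

variable [IsNoetherianRing R]

/-- Dimension shifting along the dual exact sequence of a syzygy: if `Ext^{<t}(X, C) = 0` and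
`Ext^{>0}(N, C) = 0`, then `Ext^{<t}(X, Hom(N, C)) = 0`. -/
theorem dext_hom_vanish (t : ℕ) (hC : ∀ i < t, Subsingleton (DExt R X C i)) (i : ℕ) (hi : i < t)
    (N : Type u) [AddCommGroup N] [Module R N] [Module.Finite R N]
    (hN : ∀ i, 0 < i → Subsingleton (DExt R N C i)) :
    Subsingleton (DExt R X (N →ₗ[R] C) i) := by
  induction i generalizing N with
  | zero =>
    obtain ⟨b, N', g, hg, hr, hN', hs⟩ := exists_syzygy C hN
    have h1 := push_injective X (lcomp_injective hg) hs (lcomp_range_eq_ker hr hg) 0 (by simp)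
    have := hC 0 hi
    have := (evMap_bijective_free (R := R) X C b 0).1.subsingleton
    exact h1.subsingleton
  | succ i ih =>
    obtain ⟨b, N', g, hg, hr, hN', hs⟩ := exists_syzygy C hN
    have h1 := push_injective X (lcomp_injective hg) hs (lcomp_range_eq_ker hr hg) (i + 1)
      (fun j hj => by obtain rfl : j = i := by omega
                      exact ih (by omega) N' hN')
    have := hC _ hi
    have := (evMap_bijective_free (R := R) X C b (i + 1)).1.subsingleton
    exact h1.subsingleton

theorem evMap_injective (t : ℕ) (hC : ∀ i < t, Subsingleton (DExt R X C i))
    (N : Type u) [AddCommGroup N] [Module R N] [Module.Finite R N]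
    (hN : ∀ i, 0 < i → Subsingleton (DExt R N C i)) :
    Function.Injective (evMap (R := R) X C N t) := by
  obtain ⟨b, N', g, hg, hr, hN', hs⟩ := exists_syzygy C hN
  have h1 := push_injective X (lcomp_injective hg) hs (lcomp_range_eq_ker hr hg) t
    (fun j hj => dext_hom_vanish X C t hC j (by omega) N' hN')
  rw [injective_iff_map_eq_zero]
  intro x hx
  apply (injective_iff_map_eq_zero _).1 h1
  apply (injective_iff_map_eq_zero _).1 (evMap_bijective_free (R := R) X C b t).1
  rw [evMap_push, hx, LinearMap.zero_comp]

/-- Below the first degree `t` in which `Ext(X, C)` may be nonzero, `Ext(X, Hom(N, C))` vanishes for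
`N` and its syzygies, so `Ext^t(X, Hom(-, C))` is left exact on them; the comparison
with `Hom(-, Ext^t(X, C))` reduces to finite free modules. -/
theorem evMap_bijective (t : ℕ) (hC : ∀ i < t, Subsingleton (DExt R X C i))
    (N : Type u) [AddCommGroup N] [Module R N] [Module.Finite R N]
    (hN : ∀ i, 0 < i → Subsingleton (DExt R N C i)) :
    Function.Bijective (evMap (R := R) X C N t) := by
  refine ⟨evMap_injective X C t hC N hN, fun φ => ?_⟩
  obtain ⟨b, N', g, hg, hr, hN', hs⟩ := exists_syzygy C hN
  obtain ⟨y, hy⟩ := (evMap_bijective_free (R := R) X C b t).2 (φ ∘ₗ g)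
  have h0 : push X t (N'.subtype.lcomp R C) y = 0 := by
    apply (injective_iff_map_eq_zero _).1 (evMap_injective X C t hC N' hN')
    rw [evMap_push, hy]
    ext v
    have : g v.1 = 0 := by
      rw [← LinearMap.mem_ker, ← hr]; exact ⟨v, rfl⟩
    simp [this]
  obtain ⟨x, rfl⟩ := push_exact X (lcomp_injective hg) hs (lcomp_range_eq_ker hr hg) y h0
  refine ⟨x, lcomp_injective (Y := DExt R X C t) hg ?_⟩
  rw [evMap_push] at hy
  exact hy

end Evaluation

/-! ### Lengths over a local ring -/

section Length

variable {R : Type u} [CommRing R]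

/-- If `E` is a `k`-vector space, then `Hom_R(Q, E) = Hom_k(k ⊗ Q, E) = E^c`, where `c` is the minimal
number of generators of `Q`; by Nakayama `c = 0` only if `Q = 0`. -/
theorem exists_length_hom [IsLocalRing R] (Q : Type u) [AddCommGroup Q] [Module R Q]
    [Module.Finite R Q] (E : Type u) [AddCommGroup E] [Module R E]
    (hE : ∀ r ∈ IsLocalRing.maximalIdeal R, ∀ e : E, r • e = 0) :
    ∃ c : ℕ, Module.length R (Q →ₗ[R] E) = c * Module.length R E ∧ (c = 0 → Subsingleton Q) := by
  let k := IsLocalRing.ResidueField R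
  have ht : Module.IsTorsionBySet R E (IsLocalRing.maximalIdeal R) := fun e r => hE _ r.2 e
  let _ : Module k E := ht.module
  have : IsScalarTower R k E := ht.isScalarTower
  let b := Module.finBasis k (TensorProduct R k Q)
  let e : (Q →ₗ[R] E) ≃ₗ[R] (Fin (Module.finrank k (TensorProduct R k Q)) → E) :=
    ((LinearMap.liftBaseChangeEquiv k).restrictScalars R).trans
      ((b.constr k).symm.restrictScalars R)
  refine ⟨Module.finrank k (TensorProduct R k Q), ?_, fun h => ?_⟩
  · rw [e.length_eq, Module.length_pi]; simp
  · exact IsLocalRing.subsingleton_tensorProduct.1 (Module.finrank_zero_iff.1 h)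

theorem smul_dext_residueField [IsLocalRing R] (Y : Type u) [AddCommGroup Y] [Module R Y] (n : ℕ)
    (r : R) (hr : r ∈ IsLocalRing.maximalIdeal R)
    (x : DExt R (IsLocalRing.ResidueField R) Y n) : r • x = 0 := by
  have h0 : r • 𝟙 (ModuleCat.of R (IsLocalRing.ResidueField R)) = 0 := by
    ext y
    change r • y = 0
    rw [Algebra.smul_def, IsLocalRing.ResidueField.algebraMap_eq,
      (IsLocalRing.residue_eq_zero_iff r).2 hr, zero_mul]
  rw [← Abelian.Ext.mk₀_id_comp x, ← Abelian.Ext.smul_comp, ← Abelian.Ext.mk₀_smul, h0,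
    Abelian.Ext.mk₀_zero, Abelian.Ext.zero_comp]

end Length

/-! ### Totally reflexive modules -/

section Reflexive

variable {R : Type u} [CommRing R] (X : Type u) [AddCommGroup X] [Module R X]
  {C M : Type u} [AddCommGroup C] [Module R C] [AddCommGroup M] [Module R M]

theorem IsTotallyCReflexive.dext (h : IsTotallyCReflexive R C M) {i : ℕ} (hi : 0 < i) :
    Subsingleton (DExt R M C i) :=
  (subsingleton_extM_iff _ _).1 (h.2.2 i hi).1

theorem IsTotallyCReflexive.dext_dual (h : IsTotallyCReflexive R C M) {i : ℕ} (hi : 0 < i) :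
    Subsingleton (DExt R (M →ₗ[R] C) C i) :=
  (subsingleton_extM_iff _ _).1 (h.2.2 i hi).2

theorem push_bijective {Y Z : Type u} [AddCommGroup Y] [Module R Y] [AddCommGroup Z] [Module R Z]
    (n : ℕ) (f : Y →ₗ[R] Z) (hf : Function.Bijective f) : Function.Bijective (push X n f) := by
  let e := LinearEquiv.ofBijective f hf
  refine Function.bijective_iff_has_inverse.2
    ⟨push X n (e.symm : Z →ₗ[R] Y), fun x => ?_, fun x => ?_⟩
  · rw [push_push]
    have : (e.symm : Z →ₗ[R] Y) ∘ₗ f = LinearMap.id := LinearMap.ext e.symm_apply_apply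
    rw [this, push_id]
  · rw [push_push]
    have : f ∘ₗ (e.symm : Z →ₗ[R] Y) = LinearMap.id := LinearMap.ext e.apply_symm_apply
    rw [this, push_id]

variable [IsNoetherianRing R] [Module.Finite R C] {t : ℕ}

theorem dext_vanish_of_reflexive (hC : ∀ i < t, Subsingleton (DExt R X C i))
    (hM : IsTotallyCReflexive R C M) {i : ℕ} (hi : i < t) :
    Subsingleton (DExt R X M i) := by
  have := hM.1
  have := dext_hom_vanish X C t hC i hi (M →ₗ[R] C) fun i hi => hM.dext_dual hi
  exact (push_bijective X i _ hM.2.1).1.subsingleton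

/-- For `M` totally `C`-reflexive, `coev` is `evMap` for the dual `Hom(M, C)`, read through the
biduality isomorphism. -/
theorem coev_bijective (hC : ∀ i < t, Subsingleton (DExt R X C i))
    (hM : IsTotallyCReflexive R C M) :
    Function.Bijective (coev (R := R) X M C t) := by
  have := hM.1
  have h := (evMap_bijective X C t hC (M →ₗ[R] C) fun i hi => hM.dext_dual hi).comp
    (push_bijective X t _ hM.2.1)
  convert h using 1
  ext x φ
  change push X t φ x = evMap X C (M →ₗ[R] C) t (push X t _ x) φ
  rw [evMap_apply, push_push]
  rfl

/-- Let `f : K → G` be a map of totally `C`-reflexive modules and `E = Ext^t(X, C)`. Through `coev`,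
the map `f_*` on `Ext^t(X, -)` is precomposition with `f^* : Hom(G, C) → Hom(K, C)`, as a map
`Hom(Hom(K, C), E) → Hom(Hom(G, C), E)`; hence its kernel is `Hom(coker f^*, E)`. -/
theorem nonempty_ker_equiv (hC : ∀ i < t, Subsingleton (DExt R X C i))
    {K G : Type u} [AddCommGroup K] [Module R K] [AddCommGroup G]
    [Module R G] (hK : IsTotallyCReflexive R C K) (hG : IsTotallyCReflexive R C G)
    (f : K →ₗ[R] G) :
    Nonempty (LinearMap.ker (push X t f) ≃ₗ[R]
      (((K →ₗ[R] C) ⧸ LinearMap.range (f.lcomp R C)) →ₗ[R] DExt R X C t)) := by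
  let eK := LinearEquiv.ofBijective _ (coev_bijective X hC hK)
  let q := (LinearMap.range (f.lcomp R C)).mkQ
  have hq : Function.Surjective q := Submodule.mkQ_surjective _
  have h1 : LinearMap.range (q.lcomp R (DExt R X C t)) =
      LinearMap.ker ((f.lcomp R C).lcomp R (DExt R X C t)) :=
    lcomp_range_eq_ker (Submodule.ker_mkQ _).symm hq
  have h2 : (LinearMap.ker (push X t f)).map (eK : DExt R X K t →ₗ[R] _) =
      LinearMap.ker ((f.lcomp R C).lcomp R (DExt R X C t)) := by
    ext ψ
    obtain ⟨x, rfl⟩ := eK.surjective ψ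
    have h3 : eK x ∘ₗ f.lcomp R C = coev X G C t (push X t f x) := by
      ext φ
      rw [coev_apply, push_push]
      rfl
    have h4 : (f.lcomp R C).lcomp R (DExt R X C t) (eK x) = 0 ↔ push X t f x = 0 := by
      change eK x ∘ₗ f.lcomp R C = 0 ↔ _
      rw [h3, map_eq_zero_iff _ (coev_bijective X hC hG).1]
    rw [LinearMap.mem_ker, h4]
    constructor
    · rintro ⟨y, hy, h⟩
      rw [← eK.injective h]; exact hy
    · intro h
      exact ⟨x, h, rfl⟩
  exact ⟨((LinearEquiv.ofSubmodules eK _ _ h2).trans (LinearEquiv.ofEq _ _ h1.symm)).trans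
    (LinearEquiv.ofInjective _ (lcomp_injective hq)).symm⟩

/-- The degenerate case in which all `Ext^i(X, C)` vanish. -/
theorem dext_vanish_of_gcDimLE (hC : ∀ i, Subsingleton (DExt R X C i)) (n : ℕ) :
    ∀ (M : Type u) [AddCommGroup M] [Module R M], gcDimLE R C n M →
      ∀ i, Subsingleton (DExt R X M i) := by
  induction n with
  | zero =>
    intro M _ _ hM i
    exact dext_vanish_of_reflexive X (fun j _ => hC j) hM (Nat.lt_succ_self i)
  | succ n ih =>
    rintro M _ _ ⟨G, K, _, _, _, _, f, g, hG, hf, hg, h, hK⟩ i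
    obtain ⟨δ, h1, -⟩ := exists_connecting X hf hg h i
    refine subsingleton_of_forall_eq 0 fun x => ?_
    have := ih K hK (i + 1)
    obtain ⟨y, rfl⟩ := h1 x (Subsingleton.elim _ _)
    have := dext_vanish_of_reflexive X (t := i + 1) (fun j _ => hC j) hG (Nat.lt_succ_self i)
    rw [Subsingleton.elim y 0, map_zero]

end Reflexive

/-! ### Cokernels of maps of totally reflexive modules -/

section Cokernel

variable {R : Type u} [CommRing R]
  {C : Type u} [AddCommGroup C] [Module R C] {M K G : Type u} [AddCommGroup M] [Module R M]
  [AddCommGroup K] [Module R K] [AddCommGroup G] [Module R G] {f : K →ₗ[R] G} {g : G →ₗ[R] M}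

/-- In `0 → K → G → M → 0` with `K` and `G` totally `C`-reflexive, `M` is totally `C`-reflexive as
soon as the dual sequence `0 → M^* → G^* → K^* → 0` is exact on the right. -/
theorem IsTotallyCReflexive.of_shortExact (hf : Function.Injective f) (hg : Function.Surjective g)
    (h : LinearMap.range f = LinearMap.ker g) (hK : IsTotallyCReflexive R C K)
    (hG : IsTotallyCReflexive R C G) (hs : Function.Surjective (f.lcomp R C)) :
    IsTotallyCReflexive R C M := by
  have hinj := lcomp_injective (Y := C) hg
  have hr := lcomp_range_eq_ker (Y := C) h hg
  have hss := lcomp_surjective hinj hs hr (hK.dext_dual one_pos)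
  refine ⟨have := hG.1; Module.Finite.of_surjective g hg, ⟨?_, ?_⟩, fun i hi => ⟨?_, ?_⟩⟩
  · rw [injective_iff_map_eq_zero]
    intro m hm
    obtain ⟨x, rfl⟩ := hg m
    -- Evaluation at `x` kills `ker f^* = M^*`, hence factors through `f^* : G^* → K^*`.
    have hk : LinearMap.ker (f.lcomp R C) ≤
        LinearMap.ker ((LinearMap.id : (G →ₗ[R] C) →ₗ[R] _).flip x) := by
      rw [← hr]
      rintro _ ⟨φ, rfl⟩
      exact LinearMap.congr_fun hm φ
    let θ : (K →ₗ[R] C) →ₗ[R] C := (LinearMap.ker (f.lcomp R C)).liftQ _ hk ∘ₗ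
      ((f.lcomp R C).quotKerEquivOfSurjective hs).symm
    have hθ (φ : G →ₗ[R] C) : θ (f.lcomp R C φ) = φ x := by
      have : ((f.lcomp R C).quotKerEquivOfSurjective hs).symm (f.lcomp R C φ) =
          Submodule.Quotient.mk φ := by
        rw [LinearEquiv.symm_apply_eq]; rfl
      change (LinearMap.ker (f.lcomp R C)).liftQ _ hk
        (((f.lcomp R C).quotKerEquivOfSurjective hs).symm (f.lcomp R C φ)) = _
      rw [this]; rfl
    obtain ⟨k, hk'⟩ := hK.2.1.2 θ
    have hx : f k = x := hG.2.1.1 <| LinearMap.ext fun φ => by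
      change φ (f k) = φ x
      rw [← hθ φ, ← hk']; rfl
    rw [← hx, ← LinearMap.mem_ker, ← h]
    exact ⟨k, rfl⟩
  · intro ψ
    obtain ⟨ψ', rfl⟩ := hss ψ
    obtain ⟨x, rfl⟩ := hG.2.1.2 ψ'
    exact ⟨g x, rfl⟩
  · rw [subsingleton_extM_iff]
    obtain ⟨i, rfl⟩ := Nat.exists_eq_add_of_lt hi
    rw [zero_add]
    rcases i with _ | i
    · exact dext_one_subsingleton hf hg h (hG.dext one_pos) hs
    · exact dext_subsingleton_right hf hg h (i + 1) (hK.dext (Nat.succ_pos _))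
        (hG.dext (Nat.succ_pos _))
  · rw [subsingleton_extM_iff]
    exact dext_subsingleton_left hinj hs hr i (hK.dext_dual (Nat.succ_pos _)) (hG.dext_dual hi)

end Cokernel

/-! ### The first nonvanishing `Ext^i(k, M)` -/

section Main

variable {R : Type u} [CommRing R] [IsNoetherianRing R] [IsLocalRing R]
  {C : Type u} [AddCommGroup C] [Module R C] [Module.Finite R C] {t : ℕ}

local notation "𝕜" => IsLocalRing.ResidueField R

theorem exists_length_ker (hC : ∀ i < t, Subsingleton (DExt R 𝕜 C i))
    {K G : Type u} [AddCommGroup K] [Module R K] [AddCommGroup G]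
    [Module R G] (hK : IsTotallyCReflexive R C K) (hG : IsTotallyCReflexive R C G)
    (f : K →ₗ[R] G) :
    ∃ c : ℕ, Module.length R (LinearMap.ker (push 𝕜 t f)) = c * Module.length R (DExt R 𝕜 C t) ∧
      (c = 0 → Function.Surjective (f.lcomp R C)) := by
  have := hK.1
  obtain ⟨e⟩ := nonempty_ker_equiv 𝕜 hC hK hG f
  obtain ⟨c, h1, h2⟩ := exists_length_hom ((K →ₗ[R] C) ⧸ LinearMap.range (f.lcomp R C))
    (DExt R 𝕜 C t) (smul_dext_residueField C t)
  refine ⟨c, by rw [e.length_eq, h1], fun hc => ?_⟩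
  rw [← LinearMap.range_eq_top]
  exact Submodule.Quotient.subsingleton_iff.1 (h2 hc)

/-- The cokernel `Q` of `f^*` satisfies `Hom(Q, Ext^t(k, C)) = 0`, so it vanishes. -/
theorem lcomp_surjective_of_push_injective (hC : ∀ i < t, Subsingleton (DExt R 𝕜 C i))
    (hE : Nontrivial (DExt R 𝕜 C t))
    {K G : Type u} [AddCommGroup K] [Module R K] [AddCommGroup G]
    [Module R G] (hK : IsTotallyCReflexive R C K) (hG : IsTotallyCReflexive R C G)
    (f : K →ₗ[R] G) (hf : Function.Injective (push 𝕜 t f)) :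
    Function.Surjective (f.lcomp R C) := by
  obtain ⟨c, h1, h2⟩ := exists_length_ker hC hK hG f
  refine h2 ?_
  rw [LinearMap.ker_eq_bot.2 hf, Module.length_bot] at h1
  have h3 := (Module.length_pos_iff (R := R)).2 hE |>.ne'
  simpa [h3] using h1.symm

/-- A module of finite `G_C`-dimension with `depth M ≥ depth C` is totally `C`-reflexive: the case of
the Auslander–Bridger formula in which the `G_C`-dimension is zero. -/
theorem reflexive_of_vanish (hC : ∀ i < t, Subsingleton (DExt R 𝕜 C i))
    (hE : Nontrivial (DExt R 𝕜 C t)) (n : ℕ) :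
    ∀ (M : Type u) [AddCommGroup M] [Module R M], gcDimLE R C n M →
      (∀ i < t, Subsingleton (DExt R 𝕜 M i)) → IsTotallyCReflexive R C M := by
  induction n with
  | zero => intro M _ _ h _; exact h
  | succ n ih =>
    rintro M _ _ ⟨G, K, _, _, _, _, f, g, hG, hf, hg, h, hK⟩ hM
    have hinj (i : ℕ) (hi : i ≤ t) : Function.Injective (push 𝕜 i f) :=
      push_injective 𝕜 hf hg h i fun j hj => hM j (by omega)
    have hK' := ih K hK fun i hi =>
      have := dext_vanish_of_reflexive 𝕜 hC hG hi
      (hinj i hi.le).subsingleton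
    exact .of_shortExact hf hg h hK' hG
      (lcomp_surjective_of_push_injective hC hE hK' hG f (hinj t le_rfl))

/-- The case of `dvd_length` for `M` totally `C`-reflexive: `Ext^i(k, M)` vanishes for `i < t`, and
`Ext^t(k, M) = Hom(Hom(M, C), Ext^t(k, C))`; the latter vanishes only if `M = 0`. -/
theorem dvd_length_of_reflexive (hC : ∀ i < t, Subsingleton (DExt R 𝕜 C i))
    (hE : Nontrivial (DExt R 𝕜 C t)) {M : Type u} [AddCommGroup M] [Module R M]
    (hM : IsTotallyCReflexive R C M) (i : ℕ) (hi : ∀ j < i, Subsingleton (DExt R 𝕜 M j)) :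
    Module.length R (DExt R 𝕜 C t) ∣ Module.length R (DExt R 𝕜 M i) := by
  have := hM.1
  obtain ⟨c, h1, h2⟩ := exists_length_hom (M →ₗ[R] C) (DExt R 𝕜 C t) (smul_dext_residueField C t)
  have e := LinearEquiv.ofBijective _ (coev_bijective 𝕜 hC hM)
  rw [← e.length_eq] at h1
  rcases lt_trichotomy i t with h | rfl | h
  · have := dext_vanish_of_reflexive 𝕜 hC hM h
    rw [Module.length_eq_zero (M := DExt R 𝕜 M i)]
    exact dvd_zero _
  · exact ⟨c, by rw [h1, mul_comm]⟩
  · have := hi t h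
    have hE' := (Module.length_pos_iff (R := R)).2 hE |>.ne'
    rw [Module.length_eq_zero] at h1
    have := h2 (by simpa [hE'] using h1.symm)
    have : Subsingleton M := hM.2.1.1.subsingleton
    have : Subsingleton (DExt R 𝕜 M i) := subsingleton_of_forall_eq 0 fun x => by
      rw [← push_id 𝕜 i x, Subsingleton.elim (LinearMap.id : M →ₗ[R] M) 0, push_zero]; rfl
    rw [Module.length_eq_zero (M := DExt R 𝕜 M i)]
    exact dvd_zero _

/-- If `t = depth C`, `M` has finite `G_C`-dimension and `Ext^j(k, M) = 0` for `j < i`, then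
`ℓ(Ext^t(k, C))` divides `ℓ(Ext^i(k, M))`. For `i < t` one passes from `(M, i)` to `(K, i + 1)`
along `0 → K → G → M → 0`, until `i + 1 = t`. -/
theorem dvd_length (hC : ∀ i < t, Subsingleton (DExt R 𝕜 C i))
    (hE : Nontrivial (DExt R 𝕜 C t)) (n : ℕ) :
    ∀ (M : Type u) [AddCommGroup M] [Module R M], gcDimLE R C n M →
      ∀ i : ℕ, (∀ j < i, Subsingleton (DExt R 𝕜 M j)) →
        Module.length R (DExt R 𝕜 C t) ∣ Module.length R (DExt R 𝕜 M i) := by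
  induction n with
  | zero => intro M _ _ hM i hi; exact dvd_length_of_reflexive hC hE hM i hi
  | succ n ih =>
    intro M _ _ hM i hi
    by_cases hit : t ≤ i
    · exact dvd_length_of_reflexive hC hE
        (reflexive_of_vanish hC hE _ M hM fun j hj => hi j (by omega)) i hi
    obtain ⟨G, K, _, _, _, _, f, g, hG, hf, hg, h, hK⟩ := hM
    have hK0 (j : ℕ) (hj : j < i + 1) : Subsingleton (DExt R 𝕜 K j) :=
      have := dext_vanish_of_reflexive 𝕜 hC hG (i := j) (by omega)
      (push_injective 𝕜 hf hg h j fun l hl => hi l (by omega)).subsingleton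
    obtain ⟨δ, h1, h2⟩ := exists_connecting 𝕜 hf hg h i
    have hδ : Function.Injective δ := by
      rw [injective_iff_map_eq_zero]
      intro x hx
      obtain ⟨y, rfl⟩ := h1 x hx
      have := dext_vanish_of_reflexive 𝕜 hC hG (i := i) (by omega)
      rw [Subsingleton.elim y 0, map_zero]
    rw [(LinearEquiv.ofInjective δ hδ).length_eq, h2]
    rcases Nat.lt_or_eq_of_le (show i + 1 ≤ t by omega) with hlt | rfl
    · have := dext_vanish_of_reflexive 𝕜 hC hG hlt
      rw [show LinearMap.ker (push 𝕜 (i + 1) f) = ⊤ from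
        LinearMap.ker_eq_top.2 (LinearMap.ext fun x => Subsingleton.elim _ _),
        Submodule.topEquiv.length_eq]
      exact ih K hK (i + 1) hK0
    · obtain ⟨c, hc, -⟩ := exists_length_ker hC (reflexive_of_vanish hC hE n K hK hK0) hG f
      exact ⟨c, by rw [hc, mul_comm]⟩

end Main

/-- If `C` is semidualizing over a Noetherian local ring `R` and `M` is a nonzero
Cohen-Macaulay module of finite `G_C`-dimension, then `r_R(C)` divides `r_R(M)`. -/
theorem rtype_dvd_of_cohenMacaulay (R : Type u) [CommRing R] [IsNoetherianRing R] [IsLocalRing R]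
    (C : Type u) [AddCommGroup C] [Module R C] (hC : IsSemidualizing R C)
    (M : Type u) [AddCommGroup M] [Module R M] [Nontrivial M]
    (hCM : IsCohenMacaulayModule R M) (hG : HasFiniteGCDim R C M) :
    rtype R C ∣ rtype R M := by
  have := hC.1
  obtain ⟨n, hn⟩ := hG
  have key (Y : Type u) [AddCommGroup Y] [Module R Y] (j : ℕ) (hj : j < depthNat R Y) :
      Subsingleton (DExt R (IsLocalRing.ResidueField R) Y j) := by
    rw [← subsingleton_extM_iff, ← not_nontrivial_iff_subsingleton]
    exact Nat.notMem_of_lt_sInf hj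
  rw [rtype, rtype, mLength_extM, mLength_extM]
  -- If every `Ext^i(k, C)` vanishes, `depthNat R C` is a junk value, but then `r(M) = 0`.
  by_cases h : ∃ i, Nontrivial (extM R (IsLocalRing.ResidueField R) C i)
  · have hE := Nat.sInf_mem (s := {i | Nontrivial (extM R (IsLocalRing.ResidueField R) C i)}) h
    refine dvd_length (key C) ?_ n M hn _ (key M)
    rw [← not_subsingleton_iff_nontrivial, ← subsingleton_extM_iff, not_subsingleton_iff_nontrivial]
    exact hE
  · have := dext_vanish_of_gcDimLE (IsLocalRing.ResidueField R) (fun i => by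
      rw [← subsingleton_extM_iff, ← not_nontrivial_iff_subsingleton]
      exact fun hi => h ⟨i, hi⟩) n M hn (depthNat R M)
    rw [Module.length_eq_zero (M := DExt R (IsLocalRing.ResidueField R) M _)]
    exact dvd_zero _
end

section
/- Let (R,m) be a commutative Noetherian local ring and let C be a semidualizing R-module with r_R(C) = 1. If there exists a nonzero totally C-reflexive R-module of finite length, then C is a dualizing module for R. -/
/-!
Write `k` for the residue field, `m` for the maximal ideal, `ℓ` for length and
`D = Hom(-, C)`. Reflexivity of the nonzero finite length module `M` gives `D(M) ≠ 0`. A simple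
submodule of the image of a nonzero map `M → C` embeds `k` in `C`, so `C` has depth `0` and type `1`
reads `ℓ(D(k)) = 1`.

Left exactness of `D` then yields `ℓ(D(N)) ≤ ℓ(N)` for all `N` of finite length
(`length_hom_le`), so `M ≅ D(D(M))` forces `ℓ(D(M)) = ℓ(M)`. For a maximal submodule `N` of `M`, with
`M/N ≅ k`, counting lengths shows that `D(M) → D(N)` is surjective (`extendsFromKer_mkQ`). Together
with `Ext^1(M, C) = 0` this gives `Ext^1(k, C) = 0`, hence `Ext^1(Q, C) = 0` for all `Q` of finite
length. The vanishing is phrased as extendability of maps into `C` from kernels of surjections onto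
`Q` (`ExtendsFromKer`).

As `C` is Noetherian, the annihilators `(0 :_C m ^ n)` stabilize. Extending maps from
`m^n/m^{n+1}` to `R/m^{n+1}` then shows `m^n = m^{n+1}` for large `n`
(`isNilpotent_maximalIdeal`), so `R` is Artinian. Every `R/I` now has finite length, and Baer's
criterion makes `C` injective.
-/

open CategoryTheory

universe u

/-! ### Ext in terms of projective resolutions -/

/-- `Ext^{i+1}(M, C) = 0` says that every cocycle `P_{i+1} → C` factors through the differential
`P_{i+1} → P_i`. -/
lemma subsingleton_extM_succ_iff (R : Type u) [CommRing R] (M C : Type u) [AddCommGroup M]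
    [Module R M] [AddCommGroup C] [Module R C]
    (P : ProjectiveResolution (ModuleCat.of R M)) (i : ℕ) :
    Subsingleton (extM R M C (i + 1)) ↔ ∀ f : P.complex.X (i + 1) ⟶ ModuleCat.of R C,
      P.complex.d (i + 2) (i + 1) ≫ f = 0 → ∃ g : P.complex.X i ⟶ ModuleCat.of R C,
        P.complex.d (i + 1) i ≫ g = f := by
  rw [← ModuleCat.isZero_iff_subsingleton, extM, (P.isoExt (i + 1) (ModuleCat.of R C)).isZero_iff,
    ← HomologicalComplex.exactAt_iff_isZero_homology,
    HomologicalComplex.exactAt_iff' _ i (i + 1) (i + 2) (by simp) (by simp),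
    ShortComplex.moduleCat_exact_iff]
  rfl

/-- The isomorphism `Ext^0(M, C) ≃ Hom(M, C)`, from left exactness of `Hom(-, C)`. -/
noncomputable def extZeroEquiv (R : Type u) [CommRing R] (M C : Type u) [AddCommGroup M]
    [Module R M] [AddCommGroup C] [Module R C] : extM R M C 0 ≃ₗ[R] (M →ₗ[R] C) := by
  let F := (linearYoneda R (ModuleCat.{u} R)).obj (ModuleCat.of R C)
  haveI : Limits.PreservesFiniteLimits F := by
    have : Limits.PreservesLimits (F ⋙ forget (ModuleCat R)) :=
      inferInstanceAs (Limits.PreservesLimits (yoneda.obj (ModuleCat.of R C)))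
    have := Limits.preservesLimits_of_reflects_of_preserves F (forget (ModuleCat R))
    infer_instance
  haveI := Limits.preservesFiniteColimits_rightOp F
  exact ((F.rightOp.leftDerivedZeroIsoSelf.app (ModuleCat.of R M)).unop).symm.toLinearEquiv.trans
    (ModuleCat.homLinearEquiv (S := R))

/-! ### Extending maps from kernels -/

/-- Every linear map `ker q → C` extends to the source of `q`. For surjective `q : B → Q` this is
surjectivity of `Hom(B, C) → Hom(ker q, C)`, so when `B` is projective it means
`Ext^1(Q, C) = 0`. -/
def ExtendsFromKer {R : Type u} [CommRing R] (C : Type u) [AddCommGroup C] [Module R C]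
    {B Q : Type u} [AddCommGroup B] [Module R B] [AddCommGroup Q] [Module R Q]
    (q : B →ₗ[R] Q) : Prop :=
  ∀ f : LinearMap.ker q →ₗ[R] C, ∃ g : B →ₗ[R] C, ∀ x : LinearMap.ker q, g x = f x

section

variable {R : Type u} [CommRing R] {C : Type u} [AddCommGroup C] [Module R C]

/-- If `Ext^1(M, C) = 0`, the degree-zero term of a projective resolution of `M` is a projective
module surjecting onto `M` such that maps from the kernel to `C` extend. -/
lemma exists_projective_extendsFromKer {M : Type u} [AddCommGroup M] [Module R M]
    (h : Subsingleton (extM R M C 1)) :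
    ∃ (P : Type u) (_ : AddCommGroup P) (_ : Module R P) (π : P →ₗ[R] M),
      Module.Projective R P ∧ Function.Surjective π ∧ ExtendsFromKer C π := by
  let P := projectiveResolution (ModuleCat.of R M)
  have hP := (subsingleton_extM_succ_iff R M C P 0).1 h
  have hex := (ShortComplex.moduleCat_exact_iff _).1 P.exact₀
  let e := HomologicalComplex.singleObjXSelf (ComplexShape.down ℕ) 0 (ModuleCat.of R M)
  have hinj : Function.Injective e.hom.hom := e.toLinearEquiv.injective
  have hsurj : Function.Surjective e.hom.hom := e.toLinearEquiv.surjective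
  have hepi : Function.Surjective (P.π.f 0).hom :=
    (ModuleCat.epi_iff_surjective _).1 inferInstance
  have hmem : ∀ y, (P.complex.d 1 0).hom y ∈
      LinearMap.ker (e.hom.hom ∘ₗ (P.π.f 0).hom : P.complex.X 0 →ₗ[R] M) := by
    intro y
    have := congrArg (fun t => t.hom y) P.complex_d_comp_π_f_zero
    simp only [ModuleCat.hom_comp, LinearMap.comp_apply] at this
    rw [LinearMap.mem_ker, LinearMap.comp_apply, this]
    exact map_zero e.hom.hom
  refine ⟨P.complex.X 0, inferInstance, inferInstance, e.hom.hom ∘ₗ (P.π.f 0).hom,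
    ?_, hsurj.comp hepi, ?_⟩
  · exact (IsProjective.iff_projective _).2 (P.projective 0)
  · intro f
    obtain ⟨g, hg⟩ := hP (ModuleCat.ofHom (f ∘ₗ LinearMap.codRestrict _ _ hmem)) (by
      ext y
      have h0 : (P.complex.d 1 0).hom ((P.complex.d 2 1).hom y) = 0 := by
        have := congrArg (fun t => t.hom y) (P.complex.d_comp_d 2 1 0)
        exact this
      have : LinearMap.codRestrict _ _ hmem ((P.complex.d 2 1).hom y) = 0 :=
        Subtype.ext h0
      change f (LinearMap.codRestrict _ _ hmem ((P.complex.d 2 1).hom y)) = 0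
      rw [this, map_zero])
    refine ⟨g.hom, ?_⟩
    rintro ⟨x, hx⟩
    obtain ⟨y, hy⟩ := hex x (hinj (by rw [map_zero]; exact hx))
    have := congrArg (fun t => t.hom y) hg
    change g.hom ((P.complex.d 1 0).hom y) = f (LinearMap.codRestrict _ _ hmem y) at this
    change (P.complex.d 1 0).hom y = x at hy
    subst hy
    exact this

lemma subsingleton_extM_succ_of_injective [Module.Injective R C] (N : Type u) [AddCommGroup N]
    [Module R N] (i : ℕ) : Subsingleton (extM R N C (i + 1)) := by
  let P := projectiveResolution (ModuleCat.of R N)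
  rw [subsingleton_extM_succ_iff R N C P i]
  intro f hf
  have : Injective (ModuleCat.of R C) := Module.injective_object_of_injective_module R C
  have hex := (HomologicalComplex.exactAt_iff' _ (i + 2) (i + 1) i (by simp) (by simp)).1
    (P.complex_exactAt_succ i)
  exact ⟨hex.descToInjective f hf, hex.comp_descToInjective f hf⟩

lemma ExtendsFromKer.comp {P M Q : Type u} [AddCommGroup P] [Module R P] [AddCommGroup M]
    [Module R M] [AddCommGroup Q] [Module R Q] {π : P →ₗ[R] M} {q : M →ₗ[R] Q}
    (hs : Function.Surjective π) (hπ : ExtendsFromKer C π) (hq : ExtendsFromKer C q) :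
    ExtendsFromKer C (q ∘ₗ π) := by
  intro f
  have hle : LinearMap.ker π ≤ LinearMap.ker (q ∘ₗ π) := LinearMap.ker_le_ker_comp π q
  -- Extend `f` from `ker π` to `g₁`; the difference `f - g₁` descends to `ker q`.
  obtain ⟨g₁, hg₁⟩ := hπ (f ∘ₗ Submodule.inclusion hle)
  let ρ : LinearMap.ker (q ∘ₗ π) →ₗ[R] LinearMap.ker q :=
    LinearMap.restrict π (fun x hx => hx)
  have hρ : Function.Surjective ρ := by
    rintro ⟨y, hy⟩
    obtain ⟨x, rfl⟩ := hs y
    exact ⟨⟨x, hy⟩, rfl⟩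
  obtain ⟨f', hf'⟩ : ∃ f' : LinearMap.ker q →ₗ[R] C,
      f' ∘ₗ ρ = f - g₁ ∘ₗ (LinearMap.ker (q ∘ₗ π)).subtype := by
    refine ⟨(LinearMap.ker ρ).liftQ (f - g₁ ∘ₗ (LinearMap.ker (q ∘ₗ π)).subtype) ?_ ∘ₗ
      (ρ.quotKerEquivOfSurjective hρ).symm.toLinearMap, ?_⟩
    · intro x hx
      have hx' : π x = 0 := congrArg Subtype.val hx
      have := hg₁ ⟨x, hx'⟩
      change f x - g₁ x = 0
      rw [sub_eq_zero]
      exact this.symm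
    · ext x
      have : (ρ.quotKerEquivOfSurjective hρ).symm (ρ x) = Submodule.Quotient.mk x := by
        rw [LinearEquiv.symm_apply_eq]; rfl
      simp [this]
  obtain ⟨g₂, hg₂⟩ := hq f'
  refine ⟨g₁ + g₂ ∘ₗ π, fun x => ?_⟩
  have h1 := hg₂ (ρ x)
  have h2 := LinearMap.congr_fun hf' x
  change f' (ρ x) = f x - g₁ x at h2
  change g₁ x + g₂ (ρ x : M) = f x
  rw [h1, h2]; abel

/-- If one projective presentation `q : P → S` witnesses `Ext^1(S, C) = 0`, then maps to `C` extend
along every extension with quotient `S`. -/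
lemma ExtendsFromKer.of_projective {P B S : Type u} [AddCommGroup P] [Module R P]
    [AddCommGroup B] [Module R B] [AddCommGroup S] [Module R S] [Module.Projective R P]
    {q : P →ₗ[R] S} (hs : Function.Surjective q) (hq : ExtendsFromKer C q)
    {r : B →ₗ[R] S} (hr : Function.Surjective r) : ExtendsFromKer C r := by
  intro f
  obtain ⟨v, hv⟩ := Module.projective_lifting_property r q hr
  have hv' : ∀ p, r (v p) = q p := LinearMap.congr_fun hv
  let w : LinearMap.ker q →ₗ[R] LinearMap.ker r :=
    LinearMap.restrict v (fun x hx => by rw [LinearMap.mem_ker, hv']; exact hx)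
  obtain ⟨h, hh⟩ := hq (f ∘ₗ w)
  -- `B` is the pushout of `ker r ← ker q → P`, so `f` and `h` glue to a map on `B`.
  let φ : LinearMap.ker r × P →ₗ[R] B := (LinearMap.ker r).subtype.coprod v
  let ψ : LinearMap.ker r × P →ₗ[R] C := f.coprod h
  have hφ : Function.Surjective φ := by
    intro b
    obtain ⟨p, hp⟩ := hs (r b)
    refine ⟨(⟨b - v p, ?_⟩, p), ?_⟩
    · rw [LinearMap.mem_ker, map_sub, hv', hp, sub_self]
    · simp [φ]
  have hle : LinearMap.ker φ ≤ LinearMap.ker ψ := by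
    rintro ⟨a, p⟩ hx
    have hx' : (a : B) + v p = 0 := by simpa [φ] using hx
    have hp : q p = 0 := by
      have := congrArg r hx'
      rwa [map_add, a.2, hv', zero_add, map_zero] at this
    have hw : w ⟨p, hp⟩ = -a := Subtype.ext (eq_neg_of_add_eq_zero_right hx')
    have h1 := hh ⟨p, hp⟩
    change h p = f (w ⟨p, hp⟩) at h1
    rw [hw, map_neg] at h1
    simp [ψ, h1]
  refine ⟨(LinearMap.ker φ).liftQ ψ hle ∘ₗ (φ.quotKerEquivOfSurjective hφ).symm.toLinearMap,
    fun x => ?_⟩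
  have : (φ.quotKerEquivOfSurjective hφ).symm x = Submodule.Quotient.mk (x, 0) := by
    rw [LinearEquiv.symm_apply_eq]
    change (x : B) = φ (x, 0)
    simp [φ]
  simp [this, ψ]

/-- Extension along simple quotients implies extension along finite length quotients. -/
lemma extendsFromKer_of_isFiniteLength
    (hsimple : ∀ (B S : Type u) [AddCommGroup B] [Module R B] [AddCommGroup S] [Module R S]
      [IsSimpleModule R S] (r : B →ₗ[R] S), Function.Surjective r → ExtendsFromKer C r)
    {Q : Type u} [AddCommGroup Q] [Module R Q] (hQ : IsFiniteLength R Q) :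
    ∀ (B : Type u) [AddCommGroup B] [Module R B] (r : B →ₗ[R] Q),
      Function.Surjective r → ExtendsFromKer C r := by
  induction hQ with
  | @of_subsingleton Q _ _ _ =>
    intro B _ _ r _ f
    have h : ∀ b, b ∈ LinearMap.ker r := fun b => Subsingleton.elim _ _
    exact ⟨f ∘ₗ LinearMap.codRestrict _ LinearMap.id h, fun x => rfl⟩
  | @of_simple_quotient Q _ _ N _ _ ih =>
    intro B _ _ r hr f
    -- Extend from `ker r` to the preimage `A'` of `N`, then from `A'` to `B`.
    let A' : Submodule R B := N.comap r
    let r' : A' →ₗ[R] N := LinearMap.restrict r (fun x hx => hx)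
    have hr' : Function.Surjective r' := by
      rintro ⟨y, hy⟩
      obtain ⟨x, rfl⟩ := hr y
      exact ⟨⟨x, hy⟩, rfl⟩
    obtain ⟨g, hg⟩ := ih A' r' hr'
      (f ∘ₗ LinearMap.codRestrict _ (A'.subtype ∘ₗ (LinearMap.ker r').subtype)
        (fun x => congrArg Subtype.val x.2))
    have hker : ∀ x : LinearMap.ker (N.mkQ ∘ₗ r), (x : B) ∈ A' := by
      rintro ⟨x, hx⟩
      simpa [A'] using hx
    obtain ⟨g', hg'⟩ := hsimple B (Q ⧸ N) (N.mkQ ∘ₗ r)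
      ((Submodule.mkQ_surjective N).comp hr)
      (g ∘ₗ LinearMap.codRestrict A' (LinearMap.ker (N.mkQ ∘ₗ r)).subtype hker)
    refine ⟨g', fun x => ?_⟩
    have hx : r x = 0 := x.2
    rw [hg' ⟨x, by simp [hx]⟩]
    exact hg ⟨⟨x, by simp [A', hx]⟩, Subtype.ext hx⟩

end

section

variable {R : Type u} [CommRing R] {C : Type u} [AddCommGroup C] [Module R C]

/-! ### Length of the dual over a local ring -/

/-- Additivity of length along `0 → Hom(M/N, C) → Hom(M, C) → Hom(N, C)`, with the last term
replaced by the image of restriction. -/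
lemma length_hom_eq_add_length_range {M : Type u} [AddCommGroup M] [Module R M]
    (N : Submodule R M) :
    Module.length R (M →ₗ[R] C) = Module.length R ((M ⧸ N) →ₗ[R] C) +
      Module.length R (LinearMap.range (LinearMap.lcomp R C N.subtype)) := by
  refine Module.length_eq_add_of_exact (LinearMap.lcomp R C N.mkQ)
    (LinearMap.lcomp R C N.subtype).rangeRestrict ?_
    (LinearMap.surjective_rangeRestrict _) ?_
  · intro f g h
    exact Submodule.linearMap_qext _ h
  · intro f
    rw [← LinearMap.mem_ker, LinearMap.ker_rangeRestrict, LinearMap.mem_ker]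
    constructor
    · intro h
      refine ⟨N.liftQ f fun x hx => LinearMap.congr_fun h ⟨x, hx⟩, ?_⟩
      ext x; rfl
    · rintro ⟨g, rfl⟩
      ext x
      change g (Submodule.Quotient.mk x.1) = 0
      rw [(Submodule.Quotient.mk_eq_zero N).2 x.2, map_zero]

variable [IsLocalRing R]

lemma nonempty_equiv_residueField (S : Type u) [AddCommGroup S] [Module R S]
    [IsSimpleModule R S] : Nonempty (S ≃ₗ[R] IsLocalRing.ResidueField R) := by
  obtain ⟨I, hI, ⟨e⟩⟩ := (isSimpleModule_iff_quot_maximal (R := R) (M := S)).1 inferInstance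
  obtain rfl := IsLocalRing.eq_maximalIdeal hI
  exact ⟨e⟩

lemma length_hom_simple (h : Module.length R (IsLocalRing.ResidueField R →ₗ[R] C) = 1)
    (S : Type u) [AddCommGroup S] [Module R S] [IsSimpleModule R S] :
    Module.length R (S →ₗ[R] C) = 1 := by
  obtain ⟨e⟩ := nonempty_equiv_residueField (R := R) S
  rw [← h]
  exact (LinearEquiv.congrLeft C R e).length_eq

lemma length_hom_le (h : Module.length R (IsLocalRing.ResidueField R →ₗ[R] C) = 1)
    {M : Type u} [AddCommGroup M] [Module R M] (hM : IsFiniteLength R M) :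
    Module.length R (M →ₗ[R] C) ≤ Module.length R M := by
  induction hM with
  | of_subsingleton => simp
  | @of_simple_quotient M _ _ N _ _ ih =>
    rw [length_hom_eq_add_length_range N, length_hom_simple h,
      Module.length_eq_add_of_exact N.subtype N.mkQ N.injective_subtype N.mkQ_surjective
        (LinearMap.exact_subtype_mkQ N), Module.length_eq_one R (M ⧸ N), add_comm]
    gcongr
    exact (Module.length_le_of_injective _ (Submodule.injective_subtype _)).trans ih

lemma exists_ne_zero_of_isFiniteLength {j : IsLocalRing.ResidueField R →ₗ[R] C} (hj : j ≠ 0)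
    {M : Type u} [AddCommGroup M] [Module R M] [hn : Nontrivial M] (hM : IsFiniteLength R M) :
    ∃ f : M →ₗ[R] C, f ≠ 0 := by
  cases hM with
  | of_subsingleton => exact (not_subsingleton M inferInstance).elim
  | @of_simple_quotient _ _ _ N _ _ =>
    obtain ⟨e⟩ := nonempty_equiv_residueField (R := R) (M ⧸ N)
    refine ⟨j ∘ₗ e.toLinearMap ∘ₗ N.mkQ, fun h => hj (LinearMap.ext fun y => ?_)⟩
    obtain ⟨x, hx⟩ := N.mkQ_surjective (e.symm y)
    have := LinearMap.congr_fun h x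
    rw [LinearMap.comp_apply, LinearMap.comp_apply, hx] at this
    simpa using this

lemma exists_residueField_hom_ne_zero {M : Type u} [AddCommGroup M] [Module R M]
    (hM : IsFiniteLength R M) {f : M →ₗ[R] C} (hf : f ≠ 0) :
    ∃ j : IsLocalRing.ResidueField R →ₗ[R] C, j ≠ 0 := by
  have := (isFiniteLength_iff_isNoetherian_isArtinian.1 hM).2
  have hr : Nontrivial (LinearMap.range f) :=
    Submodule.nontrivial_iff_ne_bot.2 fun h => hf (LinearMap.range_eq_bot.1 h)
  have : IsArtinian R (LinearMap.range f) :=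
    isArtinian_of_surjective M f.rangeRestrict f.surjective_rangeRestrict
  obtain ⟨S, hS⟩ := IsAtomic.exists_atom (Submodule R (LinearMap.range f))
  have : IsSimpleModule R S := isSimpleModule_iff_isAtom.2 hS
  obtain ⟨e⟩ := nonempty_equiv_residueField (R := R) S
  refine ⟨(LinearMap.range f).subtype ∘ₗ S.subtype ∘ₗ e.symm.toLinearMap, fun h => ?_⟩
  have := LinearMap.congr_fun h 1
  simp at this

/-- If dualizing does not shorten `M`, restriction `Hom(M, C) → Hom(N, C)` is surjective for every
maximal submodule `N`: its image has length at least `ℓ(M) - 1 = ℓ(N) ≥ ℓ(Hom(N, C))`. -/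
lemma extendsFromKer_mkQ (h : Module.length R (IsLocalRing.ResidueField R →ₗ[R] C) = 1)
    {M : Type u} [AddCommGroup M] [Module R M] (hM : IsFiniteLength R M)
    (hlen : Module.length R M ≤ Module.length R (M →ₗ[R] C))
    (N : Submodule R M) [IsSimpleModule R (M ⧸ N)] : ExtendsFromKer C N.mkQ := by
  have hMNA := isFiniteLength_iff_isNoetherian_isArtinian.1 hM
  have := hMNA.1
  have := hMNA.2
  have hN : IsFiniteLength R N := isFiniteLength_iff_isNoetherian_isArtinian.2
    ⟨inferInstance, inferInstance⟩
  have hNtop : Module.length R N ≠ ⊤ := Module.length_ne_top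
  have hDN : Module.length R (N →ₗ[R] C) ≤ Module.length R N := length_hom_le h hN
  have hD := isFiniteLength_iff_isNoetherian_isArtinian.1
    (Module.length_ne_top_iff.1 (ne_top_of_le_ne_top hNtop hDN))
  have := hD.1
  have := hD.2
  rw [length_hom_eq_add_length_range N, length_hom_simple h,
    Module.length_eq_add_of_exact N.subtype N.mkQ N.injective_subtype N.mkQ_surjective
      (LinearMap.exact_subtype_mkQ N), Module.length_eq_one R (M ⧸ N), add_comm,
    ENat.add_le_add_iff_left (by simp)] at hlen
  have htop : LinearMap.range (LinearMap.lcomp R C N.subtype) = ⊤ := by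
    by_contra hne
    exact absurd (Submodule.length_lt hne) (not_lt.2 (hDN.trans hlen))
  intro f
  have hle : ∀ x : N, N.subtype x ∈ LinearMap.ker N.mkQ := by simp
  obtain ⟨g, hg⟩ := LinearMap.range_eq_top.1 htop (f ∘ₗ LinearMap.codRestrict _ N.subtype hle)
  refine ⟨g, ?_⟩
  rintro ⟨x, hx⟩
  exact LinearMap.congr_fun hg ⟨x, by simpa using hx⟩

/-! ### The ring is Artinian -/

lemma isFiniteLength_of_isNilpotent [IsNoetherianRing R]
    (h : IsNilpotent (IsLocalRing.maximalIdeal R)) {Q : Type u} [AddCommGroup Q] [Module R Q]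
    [Module.Finite R Q] : IsFiniteLength R Q := by
  have : IsArtinianRing R := by
    rw [isArtinianRing_iff_isNilpotent_maximalIdeal]; exact h
  exact isFiniteLength_iff_isNoetherian_isArtinian.2 ⟨inferInstance, inferInstance⟩

lemma isFiniteLength_quotient_pow [IsNoetherianRing R] (n : ℕ) :
    IsFiniteLength R (R ⧸ IsLocalRing.maximalIdeal R ^ n) := by
  rcases subsingleton_or_nontrivial (R ⧸ IsLocalRing.maximalIdeal R ^ n) with hs | hs
  · exact .of_subsingleton
  let mk := Ideal.Quotient.mk (IsLocalRing.maximalIdeal R ^ n)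
  have hl : IsLocalRing (R ⧸ IsLocalRing.maximalIdeal R ^ n) :=
    .of_surjective' mk Ideal.Quotient.mk_surjective
  have : IsArtinianRing (R ⧸ IsLocalRing.maximalIdeal R ^ n) := by
    rw [isArtinianRing_iff_isNilpotent_maximalIdeal]
    refine ⟨n, ?_⟩
    have hle : IsLocalRing.maximalIdeal (R ⧸ IsLocalRing.maximalIdeal R ^ n) =
        (IsLocalRing.maximalIdeal R).map mk :=
      (IsLocalRing.map_maximalIdeal_of_surjective mk Ideal.Quotient.mk_surjective).symm
    rw [hle, ← Ideal.map_pow]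
    exact Ideal.map_quotient_self _
  have : IsArtinian R (R ⧸ IsLocalRing.maximalIdeal R ^ n) :=
    isArtinian_of_surjective_algebraMap (S := R) (R := R ⧸ IsLocalRing.maximalIdeal R ^ n)
      Ideal.Quotient.mk_surjective
  exact isFiniteLength_iff_isNoetherian_isArtinian.2 ⟨inferInstance, inferInstance⟩

/-- If the residue field embeds in `C` and maps to `C` extend along all surjections onto finite
length modules, then the maximal ideal `m` is nilpotent. The submodules `(0 :_C m ^ n)` stabilize;
past that point a map `R/m^{n+1} → C` kills `m^n/m^{n+1}`, yet every map `m^n/m^{n+1} → C` is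
a restriction of such a map, so `m^n = m^{n+1}` and Nakayama's lemma applies. -/
lemma isNilpotent_maximalIdeal [IsNoetherianRing R] [Module.Finite R C]
    {j : IsLocalRing.ResidueField R →ₗ[R] C} (hj : j ≠ 0)
    (hext : ∀ (B Q : Type u) [AddCommGroup B] [Module R B] [AddCommGroup Q] [Module R Q]
      (r : B →ₗ[R] Q), IsFiniteLength R Q → Function.Surjective r → ExtendsFromKer C r) :
    IsNilpotent (IsLocalRing.maximalIdeal R) := by
  set m := IsLocalRing.maximalIdeal R with hm
  -- `T n` is the annihilator `(0 :_C m ^ n)`.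
  let T : ℕ →o Submodule R C :=
    { toFun := fun n => ⨅ a : ↥(m ^ n), LinearMap.ker (LinearMap.lsmul R C a)
      monotone' := by
        intro a b hab x hx
        simp only [Submodule.mem_iInf, LinearMap.mem_ker, Subtype.forall] at hx ⊢
        exact fun y hy => hx y (Ideal.pow_le_pow_right hab hy) }
  have hT : ∀ n x, x ∈ T n ↔ ∀ a ∈ m ^ n, a • x = 0 := by
    intro n x
    change x ∈ ⨅ a : ↥(m ^ n), LinearMap.ker (LinearMap.lsmul R C a) ↔ _
    simp [Submodule.mem_iInf]
  obtain ⟨n, hn⟩ := monotone_stabilizes_iff_noetherian.2 (inferInstanceAs (IsNoetherian R C)) T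
  refine ⟨n, ?_⟩
  have hstep : m ^ n ≤ m ^ (n + 1) := by
    let B := R ⧸ m ^ (n + 1)
    let r : B →ₗ[R] R ⧸ m ^ n := Submodule.factor (Ideal.pow_le_pow_right n.le_succ)
    have hr : Function.Surjective r := Submodule.factor_surjective _
    by_contra hne
    obtain ⟨a, ha, ha'⟩ := SetLike.not_le_iff_exists.1 hne
    have hker : ∀ b : R, Submodule.Quotient.mk b ∈ LinearMap.ker r ↔ b ∈ m ^ n := by
      intro b
      rw [LinearMap.mem_ker]
      exact Submodule.Quotient.mk_eq_zero _
    have hnt : Nontrivial (LinearMap.ker r) :=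
      ⟨⟨Submodule.Quotient.mk a, (hker a).2 ha⟩, 0, fun h0 =>
        ha' ((Submodule.Quotient.mk_eq_zero _).1 (congrArg Subtype.val h0))⟩
    have hB := isFiniteLength_iff_isNoetherian_isArtinian.1
      (isFiniteLength_quotient_pow (R := R) (n + 1))
    have := hB.1
    have := hB.2
    have hfl : IsFiniteLength R (LinearMap.ker r) :=
      isFiniteLength_iff_isNoetherian_isArtinian.2 ⟨inferInstance, inferInstance⟩
    obtain ⟨f, hf⟩ := exists_ne_zero_of_isFiniteLength hj hfl
    obtain ⟨g, hg⟩ := hext B _ r (isFiniteLength_quotient_pow n) hr f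
    have hsmul : ∀ b : R, g (Submodule.Quotient.mk b) = b • g (Submodule.Quotient.mk 1) := by
      intro b
      rw [← map_smul, ← Submodule.Quotient.mk_smul, smul_eq_mul, mul_one]
    have h1 : g (Submodule.Quotient.mk 1) ∈ T n := by
      rw [hn (n + 1) n.le_succ, hT]
      intro b hb
      rw [← hsmul, (Submodule.Quotient.mk_eq_zero _).2 hb, map_zero]
    apply hf
    ext ⟨x, hx⟩
    obtain ⟨b, rfl⟩ := Submodule.Quotient.mk_surjective _ x
    rw [← hg, hsmul]
    exact (hT _ _).1 h1 b ((hker b).1 hx)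
  refine Submodule.eq_bot_of_le_smul_of_le_jacobson_bot m (m ^ n) (IsNoetherian.noetherian _) ?_
    (IsLocalRing.maximalIdeal_le_jacobson ⊥)
  rwa [smul_eq_mul, ← pow_succ']

end

/-! ### Injectivity of the semidualizing module -/

/-- If `C` is semidualizing of type `1` over a Noetherian local ring `R`, and there
exists a nonzero totally `C`-reflexive module of finite length, then `C` is dualizing. -/
theorem dualizing_of_totallyCReflexive_finiteLength (R : Type u) [CommRing R]
    [IsNoetherianRing R] [IsLocalRing R]
    (C : Type u) [AddCommGroup C] [Module R C] (hC : IsSemidualizing R C)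
    (hr : rtype R C = 1)
    (M : Type u) [AddCommGroup M] [Module R M] [Nontrivial M]
    (hM : IsTotallyCReflexive R C M) (hlen : IsFiniteLength R M) :
    IsDualizing R C := by
  have := hC.1
  obtain ⟨-, hbij, hext⟩ := hM
  let ev : M ≃ₗ[R] ((M →ₗ[R] C) →ₗ[R] C) := LinearEquiv.ofBijective _ hbij
  obtain ⟨f, hf⟩ : ∃ f : M →ₗ[R] C, f ≠ 0 := by
    -- If `Hom(M, C) = 0`, then its dual, which is `M`, vanishes.
    by_contra! h0
    obtain ⟨x, hx⟩ := exists_ne (0 : M)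
    refine hx (ev.injective ?_)
    ext f
    simp [h0 f]
  obtain ⟨j, hj⟩ := exists_residueField_hom_ne_zero hlen hf
  let e := extZeroEquiv R (IsLocalRing.ResidueField R) C
  have hdepth : depthNat R C = 0 := by
    have : Nontrivial (extM R (IsLocalRing.ResidueField R) C 0) :=
      ⟨e.symm j, 0, fun h => hj (by simpa using h)⟩
    exact Nat.sInf_eq_zero.2 (Or.inl this)
  have hone : Module.length R (IsLocalRing.ResidueField R →ₗ[R] C) = 1 := by
    rw [rtype, hdepth, mLength, ← Module.length_eq_height] at hr
    rw [← hr]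
    exact e.length_eq.symm
  have hD : Module.length R (M →ₗ[R] C) ≤ Module.length R M := length_hom_le hone hlen
  have hDfin : IsFiniteLength R (M →ₗ[R] C) := Module.length_ne_top_iff.1
    (ne_top_of_le_ne_top (Module.length_ne_top_iff.2 hlen) hD)
  have hDge : Module.length R M ≤ Module.length R (M →ₗ[R] C) :=
    ev.length_eq.le.trans (length_hom_le hone hDfin)
  obtain ⟨P, _, _, π, hP, hπ, hπext⟩ :=
    exists_projective_extendsFromKer (hext 1 one_pos).1
  have hsimple : ∀ (B S : Type u) [AddCommGroup B] [Module R B] [AddCommGroup S] [Module R S]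
      [IsSimpleModule R S] (r : B →ₗ[R] S), Function.Surjective r → ExtendsFromKer C r := by
    have : IsNoetherian R M := (isFiniteLength_iff_isNoetherian_isArtinian.1 hlen).1
    obtain ⟨N, hN⟩ := IsCoatomic.exists_coatom (Submodule R M)
    have : IsSimpleModule R (M ⧸ N) := isSimpleModule_iff_isCoatom.2 hN
    obtain ⟨e₁⟩ := nonempty_equiv_residueField (R := R) (M ⧸ N)
    intro B S _ _ _ _ _ r hr
    obtain ⟨e₂⟩ := nonempty_equiv_residueField (R := R) S
    let e₃ := e₂.trans e₁.symm
    have h1 := (hπext.comp hπ (extendsFromKer_mkQ hone hlen hDge N)).of_projective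
      (q := N.mkQ ∘ₗ π) (N.mkQ_surjective.comp hπ) (r := e₃.toLinearMap ∘ₗ r) (e₃.surjective.comp hr)
    rwa [ExtendsFromKer, LinearEquiv.ker_comp] at h1
  have hall := fun (B Q : Type u) [AddCommGroup B] [Module R B] [AddCommGroup Q] [Module R Q]
      (r : B →ₗ[R] Q) (hQ : IsFiniteLength R Q) =>
    extendsFromKer_of_isFiniteLength hsimple hQ B r
  have hnil := isNilpotent_maximalIdeal hj hall
  have hinj : Module.Injective R C := by
    refine Module.Baer.injective fun I g => ?_
    have hmem : ∀ x : LinearMap.ker I.mkQ, (LinearMap.ker I.mkQ).subtype x ∈ I := by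
      rintro ⟨x, hx⟩
      simpa using hx
    obtain ⟨g', hg'⟩ := hall R (R ⧸ I) I.mkQ (isFiniteLength_of_isNilpotent hnil)
      I.mkQ_surjective (g ∘ₗ LinearMap.codRestrict I _ hmem)
    exact ⟨g', fun x hx => hg' ⟨x, by simpa using hx⟩⟩
  refine ⟨hC, lt_of_le_of_lt (sInf_le (a := 0) ?_) ENat.top_pos⟩
  intro N _ _ i hi
  obtain ⟨i, rfl⟩ := Nat.exists_eq_succ_of_ne_zero (n := i) (by rintro rfl; simp at hi)
  exact subsingleton_extM_succ_of_injective N i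
end
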